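/- Let G_1 and G_2 be two vertex-disjoint 2-edge-colored graphs with Hamiltonian alternating cycles C_1 and C_2 respectively, and let G ∈ G_1 ⊕ G_2. If there is no good pair in G, and for each i ∈ {1,2} there is a vertex of C_i that is non-singular with respect to C_{3−i}, then G is vertex alternating-pancyclic. -/

import Mathlib

/-- An alternating cycle of length `N` in the 2-edge-colored graph `(G, c)`
(colors: `true` = red, `false` = blue). -/
def IsAltCycle {V : Type*} (G : SimpleGraph V) (c : Sym2 V → Bool) {N : ℕ}
    (x : ZMod N → V) : Prop :=
  Function.Injective x ∧ (∀ i, G.Adj (x i) (x (i + 1))) ∧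
    ∀ i, c s(x i, x (i + 1)) ≠ c s(x (i + 1), x (i + 2))

/-- There is a good pair of edges between the two vertex-disjoint alternating
cycles `x` and `y`. -/
def HasGoodPair {V : Type*} (G : SimpleGraph V) (c : Sym2 V → Bool) {N M : ℕ}
    (x : ZMod N → V) (y : ZMod M → V) : Prop :=
  ∃ (s s' : ZMod N) (t t' : ZMod M),
    (s' = s - 1 ∨ s' = s + 1) ∧ (t' = t - 1 ∨ t' = t + 1) ∧
    G.Adj (x s) (y t) ∧ G.Adj (x s') (y t') ∧
    c s(x s, x s') = c s(x s, y t) ∧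
    c s(x s', y t') = c s(x s, y t) ∧
    c s(y t', y t) = c s(x s, y t)

/-- `G` is a colored generalized sum `G ∈ G₁ ⊕ G₂` of two vertex-disjoint 2-edge-colored
graphs `G₁`, `G₂` with Hamiltonian alternating cycles `C₁ = x` (of length `2n`) and
`C₂ = y` (of length `2m`): here `G₁`, `G₂` are the induced colored subgraphs of `G` on
`V(G₁) = range x` and `V(G₂) = range y`, so the conditions are that `x` and `y` are
alternating cycles of `G` with disjoint ranges covering `V(G)` (Hamiltonicity of `Cᵢ`
in `Gᵢ`), and between any two vertices of different parts there is exactly one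
(arbitrarily colored) edge of `G`. -/
def IsCGSHam {V : Type*} (G : SimpleGraph V) (c : Sym2 V → Bool) {n m : ℕ}
    (x : ZMod (2 * n) → V) (y : ZMod (2 * m) → V) : Prop :=
  IsAltCycle G c x ∧ IsAltCycle G c y ∧
  Disjoint (Set.range x) (Set.range y) ∧
  (∀ v : V, v ∈ Set.range x ∪ Set.range y) ∧
  (∀ (i : ZMod (2 * n)) (j : ZMod (2 * m)), G.Adj (x i) (y j))

/-- The set of exterior edges of a colored generalized sum with parts `range x` and
`range y`: the edges joining the two parts. -/
def extEdges {V : Type*} {N M : ℕ} (x : ZMod N → V) (y : ZMod M → V) : Set (Sym2 V) :=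
  {e | ∃ i j, e = s(x i, y j)}

/-- The number of red exterior edges incident with `v`. -/
noncomputable def dred {V : Type*} (c : Sym2 V → Bool) {N M : ℕ}
    (x : ZMod N → V) (y : ZMod M → V) (v : V) : ℕ :=
  {e : Sym2 V | e ∈ extEdges x y ∧ v ∈ e ∧ c e = true}.ncard

/-- The number of blue exterior edges incident with `v`. -/
noncomputable def dblue {V : Type*} (c : Sym2 V → Bool) {N M : ℕ}
    (x : ZMod N → V) (y : ZMod M → V) (v : V) : ℕ :=
  {e : Sym2 V | e ∈ extEdges x y ∧ v ∈ e ∧ c e = false}.ncard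

/-- The vertex `x i` of `C₁` is singular with respect to `C₂`: the set of edges from
`x i` to `V(C₂)` (in a colored generalized sum these are all pairs `x i - y j`) is
nonempty and they all have the same color. -/
def SingularX {V : Type*} (c : Sym2 V → Bool) {N M : ℕ}
    (x : ZMod N → V) (y : ZMod M → V) (i : ZMod N) : Prop :=
  (∃ _j : ZMod M, True) ∧ ∀ j j' : ZMod M, c s(x i, y j) = c s(x i, y j')

/-- The vertex `y j` of `C₂` is singular with respect to `C₁`. -/
def SingularY {V : Type*} (c : Sym2 V → Bool) {N M : ℕ}
    (x : ZMod N → V) (y : ZMod M → V) (j : ZMod M) : Prop :=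
  (∃ _i : ZMod N, True) ∧ ∀ i i' : ZMod N, c s(x i, y j) = c s(x i', y j)

/-- A 2-edge-colored graph `(G, c)` (of even order `2N`) is vertex alternating-pancyclic:
for each vertex `v` and each `k` with `2 ≤ k` and `2k ≤ |V(G)|` (i.e. `k ∈ {2, …, N}`)
there is an alternating cycle of length `2k` in `G` passing through `v`. -/
def VertexAltPancyclic {V : Type*} [Fintype V] (G : SimpleGraph V) (c : Sym2 V → Bool) :
    Prop :=
  ∀ v : V, ∀ k : ℕ, 2 ≤ k → 2 * k ≤ Fintype.card V →
    ∃ z : ZMod (2 * k) → V, IsAltCycle G c z ∧ v ∈ Set.range z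


/-- Parity colour of an integer. -/
def parB (s : ℤ) : Bool := decide (s % 2 = 0)

lemma parB_congr {s t : ℤ} (h : s % 2 = t % 2) : parB s = parB t := by
  unfold parB; rw [h]

lemma parB_ne {s t : ℤ} (h : (s + t) % 2 = 1) : parB s = !parB t := by
  unfold parB
  by_cases h1 : t % 2 = 0
  · have : ¬ s % 2 = 0 := by omega
    simp [h1, this]
  · have : s % 2 = 0 := by omega
    simp [h1, this]

/-- Unrolled setting: two alternating cycles as periodic integer sequences. -/
structure CoreData {V : Type*} (G : SimpleGraph V) (c : Sym2 V → Bool) (n m : ℕ)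
    (X Y : ℤ → V) : Prop where
  hX : ∀ a b, X a = X b → -(2 * (n : ℤ)) < a - b → a - b < 2 * n → a = b
  hY : ∀ a b, Y a = Y b → -(2 * (m : ℤ)) < a - b → a - b < 2 * m → a = b
  hXY : ∀ a b, X a ≠ Y b
  pX : ∀ a, X (a + 2 * n) = X a
  pY : ∀ a, Y (a + 2 * m) = Y a
  aX : ∀ a, G.Adj (X a) (X (a + 1))
  aY : ∀ a, G.Adj (Y a) (Y (a + 1))
  aXY : ∀ a b, G.Adj (X a) (Y b)
  cX : ∀ a, c s(X a, X (a + 1)) = parB a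
  cY : ∀ a, c s(Y a, Y (a + 1)) = parB a
  hG : ∀ s t, (s + t) % 2 = 1 → c s(X s, Y t) = parB s → c s(X (s + 1), Y (t - 1)) ≠ parB s
  cov : ∀ v, (∃ a, v = X a) ∨ ∃ a, v = Y a

lemma exists_altCycle_of_seq {V : Type*} (G : SimpleGraph V) (c : Sym2 V → Bool) (k : ℕ)
    (hk : 2 ≤ k) (w : ℕ → V) (s : ℤ)
    (hinj : ∀ i j, i < j → j < 2 * k → w i ≠ w j)
    (hstep : ∀ i, i + 1 < 2 * k → G.Adj (w i) (w (i + 1)) ∧ c s(w i, w (i + 1)) = parB (s + i))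
    (hlast : G.Adj (w (2 * k - 1)) (w 0) ∧ c s(w (2 * k - 1), w 0) = parB (s + 1)) :
    ∃ z : ZMod (2 * k) → V, IsAltCycle G c z ∧ ∀ i, i < 2 * k → w i ∈ Set.range z := by
  have : NeZero (2 * k) := ⟨by omega⟩
  have : Fact (1 < 2 * k) := ⟨by omega⟩
  have hval : ∀ i : ZMod (2 * k), (i + 1).val = if i.val + 1 < 2 * k then i.val + 1 else 0 := by
    intro i
    have h1 := ZMod.val_lt i
    rw [ZMod.val_add, ZMod.val_one]
    split_ifs with h
    · exact Nat.mod_eq_of_lt h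
    · have : i.val + 1 = 2 * k := by omega
      rw [this, Nat.mod_self]
  have key : ∀ i : ZMod (2 * k), G.Adj (w i.val) (w (i + 1).val) ∧
      c s(w i.val, w (i + 1).val) = parB (s + i.val) := by
    intro i
    have h1 := ZMod.val_lt i
    rw [hval]
    split_ifs with h
    · exact hstep _ h
    · have : i.val = 2 * k - 1 := by omega
      rw [this]
      refine ⟨hlast.1, hlast.2.trans (parB_congr ?_)⟩
      omega
  refine ⟨fun i => w i.val, ⟨?_, fun i => (key i).1, ?_⟩, ?_⟩
  · intro i j hij
    have h1 := ZMod.val_lt i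
    have h2 := ZMod.val_lt j
    apply ZMod.val_injective
    rcases lt_trichotomy i.val j.val with h | h | h
    · exact absurd hij (hinj _ _ h h2)
    · exact h
    · exact absurd hij.symm (hinj _ _ h h1)
  · intro i
    have h2 : i + 2 = (i + 1) + 1 := by ring
    simp only [h2]
    rw [(key i).2, (key (i + 1)).2, hval]
    have h1 := ZMod.val_lt i
    have : parB (s + i.val) = !parB (s + ((if i.val + 1 < 2 * k then i.val + 1 else 0 : ℕ) : ℤ)) := by
      apply parB_ne
      split_ifs <;> push_cast <;> omega
    rw [this]
    simp
  · intro i hi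
    exact ⟨(i : ZMod (2 * k)), by simp [ZMod.val_natCast, Nat.mod_eq_of_lt hi]⟩

namespace CoreData

variable {V : Type*} {G : SimpleGraph V} {c : Sym2 V → Bool} {n m : ℕ} {X Y : ℤ → V}

lemma pXk (H : CoreData G c n m X Y) (a : ℤ) (k : ℕ) : X (a + 2 * n * k) = X a := by
  induction k with
  | zero => simp
  | succ k ih =>
    rw [← ih, ← H.pX (a + 2 * n * k)]
    congr 1; push_cast; ring

lemma pYk (H : CoreData G c n m X Y) (a : ℤ) (k : ℕ) : Y (a + 2 * m * k) = Y a := by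
  induction k with
  | zero => simp
  | succ k ih =>
    rw [← ih, ← H.pY (a + 2 * m * k)]
    congr 1; push_cast; ring

lemma stepP (H : CoreData G c n m X Y) (s t : ℤ) (h : (s + t) % 2 = 1)
    (hp : c s(X s, Y t) = parB s) : c s(X (s + 1), Y (t - 1)) = parB (s + 1) := by
  have h1 := H.hG s t h hp
  have h2 : parB (s + 1) = !parB s := parB_ne (by omega)
  rw [h2]
  revert h1
  cases c s(X (s + 1), Y (t - 1)) <;> cases parB s <;> simp

lemma stepsP (H : CoreData G c n m X Y) (s t : ℤ) (h : (s + t) % 2 = 1)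
    (hp : c s(X s, Y t) = parB s) (j : ℕ) : c s(X (s + j), Y (t - j)) = parB (s + j) := by
  induction j with
  | zero => simpa using hp
  | succ j ih =>
    have := H.stepP (s + j) (t - j) (by omega) ih
    push_cast
    rw [← add_assoc, ← sub_sub]
    exact this

lemma moveP (H : CoreData G c n m X Y) (hn : 0 < n) (hm : 0 < m) (s t s' t' : ℤ)
    (h : (s + t) % 2 = 1) (hs : s + t = s' + t')
    (hp : c s(X s, Y t) = parB s) : c s(X s', Y t') = parB s' := by
  set K : ℤ := 2 * n * (2 * m) with hK
  have hK0 : 0 < K := by positivity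
  obtain ⟨q, hq⟩ : ∃ q : ℕ, 0 ≤ s' - s + K * q := by
    refine ⟨(s' - s).natAbs, ?_⟩
    have : ((s' - s).natAbs : ℤ) = |s' - s| := Int.natCast_natAbs _
    rw [this]
    nlinarith [abs_nonneg (s' - s), neg_abs_le (s' - s)]
  obtain ⟨j, hj⟩ := Int.eq_ofNat_of_zero_le hq
  have h1 := H.stepsP s t h hp j
  have e1 : X (s + j) = X s' := by
    rw [← H.pXk s' (2 * m * q)]
    congr 1
    rw [← hj, hK]; push_cast; ring
  have e2 : Y (t - j) = Y t' := by
    rw [← H.pYk (t - j) (2 * n * q)]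
    congr 1
    rw [← hj, hK]; push_cast; linarith
  have e3 : parB (s + j) = parB s' := by
    apply parB_congr
    have : s + j = s' + 2 * (n * (2 * m) * q) := by rw [← hj, hK]; ring
    rw [this]; omega
  rw [e1, e2, e3] at h1
  exact h1

/-- The connecting function. -/
def F (c : Sym2 V → Bool) (X Y : ℤ → V) (k : ℤ) : Prop := c s(X 0, Y k) = parB 0

lemma F_iff (H : CoreData G c n m X Y) (hn : 0 < n) (hm : 0 < m) (s t : ℤ)
    (h : (s + t) % 2 = 1) : c s(X s, Y t) = parB s ↔ F c X Y (s + t) :=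
  ⟨fun hp => H.moveP hn hm s t 0 (s + t) h (by ring) hp,
   fun hp => H.moveP hn hm 0 (s + t) s t (by omega) (by ring) hp⟩

lemma F_per_m (H : CoreData G c n m X Y) (k : ℤ) :
    F c X Y (k + 2 * m) ↔ F c X Y k := by
  unfold F; rw [H.pY]

lemma F_per_n (H : CoreData G c n m X Y) (hn : 0 < n) (hm : 0 < m) (k : ℤ) (hk : k % 2 = 1) :
    F c X Y (k + 2 * n) ↔ F c X Y k := by
  have h1 := H.F_iff hn hm (0 + 2 * n) k (by omega)
  have h2 : (0 + 2 * (n : ℤ)) + k = k + 2 * n := by ring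
  rw [h2] at h1
  rw [← h1, H.pX]
  have : parB (0 + 2 * n) = parB 0 := parB_congr (by omega)
  rw [this]; rfl

lemma F_per_mz (H : CoreData G c n m X Y) (k : ℤ) (j : ℤ) :
    F c X Y (k + 2 * m * j) ↔ F c X Y k := by
  induction j using Int.induction_on with
  | zero => simp
  | succ i ih =>
    rw [← ih, ← H.F_per_m (k + 2 * m * i)]
    have : k + 2 * (m : ℤ) * (i + 1) = k + 2 * m * i + 2 * m := by ring
    rw [this]
  | pred i ih =>
    rw [← ih, ← H.F_per_m (k + 2 * m * (-i - 1))]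
    have : k + 2 * (m : ℤ) * (-i - 1) + 2 * m = k + 2 * m * (-i) := by ring
    rw [this]

lemma F_per_nz (H : CoreData G c n m X Y) (hn : 0 < n) (hm : 0 < m) (k : ℤ) (hk : k % 2 = 1)
    (j : ℤ) : F c X Y (k + 2 * n * j) ↔ F c X Y k := by
  induction j using Int.induction_on with
  | zero => simp
  | succ i ih =>
    rw [← ih, ← H.F_per_n hn hm (k + 2 * n * i) (by rw [mul_assoc]; omega)]
    have : k + 2 * (n : ℤ) * (i + 1) = k + 2 * n * i + 2 * n := by ring
    rw [this]
  | pred i ih =>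
    rw [← ih, ← H.F_per_n hn hm (k + 2 * n * (-i - 1)) (by rw [mul_assoc]; omega)]
    have : k + 2 * (n : ℤ) * (-i - 1) + 2 * n = k + 2 * n * (-i) := by ring
    rw [this]

lemma prop_trans (m : ℕ) (hm : 0 < m) (P : ℤ → Prop)
    (hper : ∀ k j : ℤ, P (k + 2 * m * j) ↔ P k) (a b : ℤ) (ha : a % 2 = 1) (hb : b % 2 = 1)
    (hPa : P a) (hPb : ¬ P b) : ∃ d : ℤ, d % 2 = 1 ∧ P d ∧ ¬ P (d + 2) := by
  by_contra hcon
  push Not at hcon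
  have h1 : ∀ j : ℕ, P (a + 2 * j) := by
    intro j
    induction j with
    | zero => simpa using hPa
    | succ j ih =>
      have := hcon (a + 2 * j) (by omega) ih
      have e : a + 2 * ((j + 1 : ℕ) : ℤ) = a + 2 * j + 2 := by push_cast; ring
      rw [e]; exact this
  apply hPb
  rw [← hper b |b - a|]
  have hz : 0 ≤ (b - a) + 2 * m * |b - a| := by
    have : (1 : ℤ) ≤ m := by exact_mod_cast hm
    nlinarith [abs_nonneg (b - a), neg_abs_le (b - a)]
  have := h1 (((b - a) + 2 * m * |b - a|) / 2).toNat
  rw [Int.toNat_of_nonneg (by omega)] at this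
  have e : a + 2 * (((b - a) + 2 * m * |b - a|) / 2) = b + 2 * m * |b - a| := by
    rw [mul_assoc]; omega
  rwa [e] at this

lemma bool_of_not (H : CoreData G c n m X Y) (hn : 0 < n) (hm : 0 < m) (s t : ℤ)
    (h : (s + t) % 2 = 1) (hF : ¬ F c X Y (s + t)) : c s(Y t, X s) = parB t := by
  rw [← H.F_iff hn hm s t h] at hF
  rw [Sym2.eq_swap, parB_ne (s := t) (t := s) (by omega)]
  revert hF
  cases c s(X s, Y t) <;> cases parB s <;> simp

/-- Cycles made of one arc of `X` and one arc of `Y`. -/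
lemma cycle_short (H : CoreData G c n m X Y) (hn : 0 < n) (hm : 0 < m) (k a b : ℕ) (hk : 2 ≤ k)
    (hab : a + b + 2 = 2 * k) (ha : a < 2 * n) (hb : b < 2 * m) (s t : ℤ)
    (hodd : (s + a + t) % 2 = 1)
    (h1 : F c X Y (s + a + t)) (h2 : ¬ F c X Y (s + t + b)) :
    ∃ z : ZMod (2 * k) → V, IsAltCycle G c z ∧ X s ∈ Set.range z ∧ Y t ∈ Set.range z := by
  refine Exists.elim (exists_altCycle_of_seq G c k hk
    (fun i => if i ≤ a then X (s + i) else Y (t + i - a - 1)) s ?_ ?_ ?_) ?_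
  · intro i j hij hj
    try dsimp only
    split_ifs with hi hj'
    · intro h
      have := H.hX _ _ h (by omega) (by omega)
      omega
    · exact H.hXY _ _
    · omega
    · intro h
      have := H.hY _ _ h (by omega) (by omega)
      omega
  · intro i hi
    try dsimp only
    rcases lt_trichotomy i a with h | h | h
    · rw [if_pos (by omega), if_pos (by omega)]
      have e : s + ((i + 1 : ℕ) : ℤ) = s + i + 1 := by push_cast; ring
      rw [e]
      exact ⟨H.aX _, H.cX _⟩
    · subst h
      rw [if_pos (by omega), if_neg (by omega)]
      have e : t + ((i + 1 : ℕ) : ℤ) - i - 1 = t := by push_cast; ring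
      rw [e]
      exact ⟨H.aXY _ _, (H.F_iff hn hm (s + i) t hodd).2 h1⟩
    · rw [if_neg (by omega), if_neg (by omega)]
      have e : t + ((i + 1 : ℕ) : ℤ) - a - 1 = t + i - a - 1 + 1 := by push_cast; ring
      rw [e]
      exact ⟨H.aY _, (H.cY _).trans (parB_congr (by omega))⟩
  · try dsimp only
    rw [if_neg (by omega), if_pos (by omega)]
    have e : t + ((2 * k - 1 : ℕ) : ℤ) - a - 1 = t + b := by omega
    have e' : s + ((0 : ℕ) : ℤ) = s := by simp
    rw [e, e']
    refine ⟨(H.aXY _ _).symm, ?_⟩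
    rw [H.bool_of_not hn hm s (t + b) (by omega) (by rwa [← add_assoc])]
    exact parB_congr (by omega)
  · rintro z ⟨hz, hr⟩
    refine ⟨z, hz, ?_, ?_⟩
    · have := hr 0 (by omega)
      simpa using this
    · have := hr (a + 1) (by omega)
      simp only [show ¬ (a + 1 ≤ a) by omega, if_false] at this
      rwa [show t + ((a + 1 : ℕ) : ℤ) - a - 1 = t by push_cast; ring] at this

lemma arith_ab (n m k : ℕ) (hn : 2 ≤ n) (hm : 2 ≤ m) (hk : 2 ≤ k) (hk2 : k < n + m) :
    ∃ a b : ℕ, a + b + 2 = 2 * k ∧ a < 2 * n ∧ b < 2 * m ∧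
      ∃ i j : ℤ, (b : ℤ) = a + 2 + 2 * n * i + 2 * m * j := by
  by_cases h1 : n < k ∧ m < k
  · refine ⟨k + n - m - 2, k + m - n, by omega, by omega, by omega, -1, 1, ?_⟩
    omega
  · by_cases h2 : m ≤ n
    · have h3 := Nat.mod_lt k (show 0 < m by omega)
      have h4 := Nat.mod_le k m
      refine ⟨2 * k - 2 - k % m, k % m, by omega, by omega, by omega, 0, -((k / m : ℕ) : ℤ), ?_⟩
      have h5 : ((m : ℤ)) * ((k / m : ℕ) : ℤ) + ((k % m : ℕ) : ℤ) = k := by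
        exact_mod_cast Nat.div_add_mod k m
      have h6 : ((2 * k - 2 - k % m : ℕ) : ℤ) = 2 * k - 2 - ((k % m : ℕ) : ℤ) := by omega
      rw [h6]
      linarith
    · have h3 := Nat.mod_lt (k - 2) (show 0 < n by omega)
      have h4 := Nat.mod_le (k - 2) n
      refine ⟨(k - 2) % n, 2 * k - 2 - (k - 2) % n, by omega, by omega, by omega,
        (((k - 2) / n : ℕ) : ℤ), 0, ?_⟩
      have h5 : ((n : ℤ)) * (((k - 2) / n : ℕ) : ℤ) + (((k - 2) % n : ℕ) : ℤ) = ((k - 2 : ℕ) : ℤ) := by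
        exact_mod_cast Nat.div_add_mod (k - 2) n
      have h6 : ((2 * k - 2 - (k - 2) % n : ℕ) : ℤ) = 2 * k - 2 - (((k - 2) % n : ℕ) : ℤ) := by omega
      have h7 : ((k - 2 : ℕ) : ℤ) = k - 2 := by omega
      rw [h6]
      linarith

lemma cycle_all_short (H : CoreData G c n m X Y) (hn : 2 ≤ n) (hm : 2 ≤ m) (k : ℕ) (hk : 2 ≤ k)
    (hk2 : k < n + m) (d : ℤ) (hd : d % 2 = 1) (hF : F c X Y d) (hF' : ¬ F c X Y (d + 2))
    (v : V) : ∃ z : ZMod (2 * k) → V, IsAltCycle G c z ∧ v ∈ Set.range z := by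
  obtain ⟨a, b, hab, ha, hb, i, j, hij⟩ := arith_ab n m k hn hm hk hk2
  have key : ∀ s t : ℤ, s + a + t = d → ∃ z : ZMod (2 * k) → V, IsAltCycle G c z ∧
      X s ∈ Set.range z ∧ Y t ∈ Set.range z := by
    intro s t hst
    refine H.cycle_short (by omega) (by omega) k a b hk hab ha hb s t (by omega) (by rwa [hst]) ?_
    have e : s + t + b = (d + 2 + 2 * n * i) + 2 * m * j := by rw [hij, ← hst]; ring
    rw [e, H.F_per_mz, H.F_per_nz (by omega) (by omega) _ (by omega)]
    exact hF'
  rcases H.cov v with ⟨s, rfl⟩ | ⟨t, rfl⟩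
  · obtain ⟨z, h1, h2, h3⟩ := key s (d - a - s) (by ring)
    exact ⟨z, h1, h2⟩
  · obtain ⟨z, h1, h2, h3⟩ := key (d - a - t) t (by ring)
    exact ⟨z, h1, h3⟩

/-- The Hamiltonian alternating cycle. -/
lemma cycle_ham (H : CoreData G c n m X Y) (hn : 2 ≤ n) (hm : 2 ≤ m)
    (d : ℤ) (hd : d % 2 = 1) (hF : F c X Y d) (hF' : ¬ F c X Y (d + 2))
    (e : ℤ) (he : e % 2 = 1) (hE : ¬ F c X Y e) (hE' : F c X Y (e + 2)) :
    ∃ z : ZMod (2 * (n + m)) → V, IsAltCycle G c z := by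
  obtain ⟨r, q, hr, hr0, hr2⟩ : ∃ (r : ℕ) (q : ℤ), d + r = e + 2 * n * q ∧ 0 < r ∧ r < 2 * n := by
    have hpos : (0 : ℤ) < 2 * n := by omega
    have h0 := Int.emod_nonneg (e - d) hpos.ne'
    have h1 := Int.emod_lt_of_pos (e - d) hpos
    have h2 := Int.mul_ediv_add_emod (e - d) (2 * n)
    obtain ⟨r, hr⟩ := Int.eq_ofNat_of_zero_le h0
    have h3 : d + r = e + 2 * n * (-((e - d) / (2 * n))) := by
      have : (r : ℤ) = (e - d) % (2 * n) := hr.symm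
      linarith
    refine ⟨r, _, h3, ?_, by omega⟩
    rcases Nat.eq_zero_or_pos r with h | h
    · exfalso
      rw [← H.F_per_nz (by omega) (by omega) e he, ← h3, h] at hE
      simp at hE
      exact hE hF
    · exact h
  have hE1 : ¬ F c X Y (d + r) := by
    rw [hr, H.F_per_nz (by omega) (by omega) e he]; exact hE
  have hE2 : F c X Y (d + r + 2) := by
    have : d + r + 2 = (e + 2) + 2 * n * q := by rw [hr]; ring
    rw [this, H.F_per_nz (by omega) (by omega) _ (by omega)]; exact hE'
  have hreven : (r : ℤ) % 2 = 0 := by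
    have : (r : ℤ) = e - d + 2 * (n * q) := by linarith
    omega
  refine Exists.elim (exists_altCycle_of_seq G c (n + m) (by omega)
    (fun i => if i < r then X (d + 1 + i)
      else if i < r + (2 * m - 2) then Y (2 + i - r)
      else if i < 2 * n + (2 * m - 2) then X (d + 1 + i - (2 * m - 2))
      else Y (i - 2 * n - (2 * m - 2))) (d + 1) ?_ ?_ ?_) ?_
  · intro i j hij hj
    try dsimp only
    split_ifs <;> first
      | omega
      | exact H.hXY _ _
      | exact (H.hXY _ _).symm
      | (intro h
         have := H.hX _ _ h (by omega) (by omega)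
         omega)
      | (intro h
         have := H.hY _ _ h (by omega) (by omega)
         omega)
  · intro i hi
    try dsimp only
    have hXX : ∀ u v : ℤ, v = u + 1 → (u + (d + 1 + i)) % 2 = 0 →
        G.Adj (X u) (X v) ∧ c s(X u, X v) = parB (d + 1 + i) := by
      rintro u v rfl h
      exact ⟨H.aX _, (H.cX _).trans (parB_congr (by omega))⟩
    have hYY : ∀ u v : ℤ, v = u + 1 → (u + (d + 1 + i)) % 2 = 0 →
        G.Adj (Y u) (Y v) ∧ c s(Y u, Y v) = parB (d + 1 + i) := by
      rintro u v rfl h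
      exact ⟨H.aY _, (H.cY _).trans (parB_congr (by omega))⟩
    have hXY : ∀ u v w : ℤ, u + v = w → F c X Y w → w % 2 = 1 → (u + (d + 1 + i)) % 2 = 0 →
        G.Adj (X u) (Y v) ∧ c s(X u, Y v) = parB (d + 1 + i) := by
      rintro u v _ rfl h h' h''
      exact ⟨H.aXY _ _, ((H.F_iff (by omega) (by omega) _ _ h').2 h).trans
        (parB_congr (by omega))⟩
    have hYX : ∀ u v w : ℤ, u + v = w → ¬ F c X Y w → w % 2 = 1 → (v + (d + 1 + i)) % 2 = 0 →
        G.Adj (Y v) (X u) ∧ c s(Y v, X u) = parB (d + 1 + i) := by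
      rintro u v _ rfl h h' h''
      exact ⟨(H.aXY _ _).symm, (H.bool_of_not (by omega) (by omega) _ _ h' h).trans
        (parB_congr (by omega))⟩
    have hE3 : ¬ F c X Y (d + r + 2 * m) := by rwa [H.F_per_m]
    have hF3 : F c X Y (d + 2 * n) := by rwa [H.F_per_n (by omega) (by omega) d hd]
    split_ifs <;> first
      | omega
      | exact hXX _ _ (by omega) (by omega)
      | exact hYY _ _ (by omega) (by omega)
      | exact hXY _ _ _ (by omega) hE2 (by omega) (by omega)
      | exact hXY _ _ _ (by omega) hF3 (by omega) (by omega)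
      | exact hYX _ _ _ (by omega) hE3 (by omega) (by omega)
  · try dsimp only
    rw [if_neg (by omega), if_neg (by omega), if_neg (by omega), if_pos (by omega)]
    refine ⟨(H.aXY _ _).symm, ?_⟩
    rw [H.bool_of_not (by omega) (by omega) _ _ (by omega) ?_]
    · exact parB_congr (by omega)
    · have e : d + 1 + ((0 : ℕ) : ℤ) + (((2 * (n + m) - 1 : ℕ) : ℤ) - 2 * n - (2 * m - 2)) = d + 2 := by
        omega
      rw [e]; exact hF'
  · rintro z ⟨hz, -⟩
    exact ⟨z, hz⟩

lemma main (H : CoreData G c n m X Y) [Fintype V] (hn : 2 ≤ n) (hm : 2 ≤ m)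
    (hcard : Fintype.card V = 2 * (n + m))
    (a b : ℤ) (ha : a % 2 = 1) (hb : b % 2 = 1) (hFa : F c X Y a) (hFb : ¬ F c X Y b) :
    VertexAltPancyclic G c := by
  obtain ⟨d, hd, hd1, hd2⟩ := prop_trans m (by omega) (F c X Y) H.F_per_mz a b ha hb hFa hFb
  obtain ⟨e, he, he1, he2⟩ := prop_trans m (by omega) (fun k => ¬ F c X Y k)
    (fun k j => not_congr (H.F_per_mz k j)) b a hb ha hFb (not_not.2 hFa)
  intro v k hk hk2
  rw [hcard] at hk2
  rcases Nat.lt_or_ge k (n + m) with h | h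
  · exact H.cycle_all_short hn hm k hk h d hd hd1 hd2 v
  · obtain rfl : k = n + m := by omega
    obtain ⟨z, hz⟩ := H.cycle_ham hn hm d hd hd1 hd2 e he he1 (not_not.1 he2)
    refine ⟨z, hz, ?_⟩
    have : NeZero (2 * (n + m)) := ⟨by omega⟩
    have hb : Function.Bijective z := by
      rw [Fintype.bijective_iff_injective_and_card]
      exact ⟨hz.1, by rw [ZMod.card, hcard]⟩
    exact hb.2 v

end CoreData

/-- Normalised unrolling of an alternating cycle. -/
lemma exists_unroll {V : Type*} {G : SimpleGraph V} {c : Sym2 V → Bool} {N : ℕ}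
    {x : ZMod N → V} (h : IsAltCycle G c x) :
    ∃ ε : ℤ, ∀ a : ℤ, c s(x ((a + ε : ℤ) : ZMod N), x ((a + ε : ℤ) + 1 : ZMod N)) = parB a := by
  obtain ⟨-, -, h3⟩ := h
  have step : ∀ a : ℤ, c s(x ((a + 1 : ℤ) : ZMod N), x ((a + 1 : ℤ) + 1 : ZMod N)) =
      !c s(x (a : ZMod N), x (a + 1 : ZMod N)) := by
    intro a
    have := h3 (a : ZMod N)
    rw [show (a : ZMod N) + 2 = a + 1 + 1 by ring] at this
    push_cast
    revert this
    cases c s(x (a : ZMod N), x (a + 1 : ZMod N)) <;>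
      cases c s(x (a + 1 : ZMod N), x (a + 1 + 1 : ZMod N)) <;> simp
  have base : ∃ ε : ℤ, c s(x (ε : ZMod N), x (ε + 1 : ZMod N)) = true := by
    by_cases h0 : c s(x ((0 : ℤ) : ZMod N), x ((0 : ℤ) + 1 : ZMod N)) = true
    · exact ⟨0, h0⟩
    · refine ⟨0 + 1, ?_⟩
      rw [step]; simpa using h0
  obtain ⟨ε, hε⟩ := base
  refine ⟨ε, fun a => ?_⟩
  induction a using Int.induction_on with
  | zero => simpa [parB] using hε
  | succ i ih =>
    have e : (i : ℤ) + 1 + ε = (i + ε) + 1 := by ring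
    rw [e, step, ih]
    exact (parB_ne (by omega)).symm
  | pred i ih =>
    have h1 := step (-(i : ℤ) - 1 + ε)
    have e : -(i : ℤ) - 1 + ε + 1 = -i + ε := by ring
    rw [e, ih] at h1
    rw [parB_ne (s := -(i : ℤ) - 1) (t := -i) (by omega), h1]
    simp

lemma two_le_of_altCycle {V : Type*} {G : SimpleGraph V} {c : Sym2 V → Bool} {n : ℕ} (hn : 0 < n)
    {x : ZMod (2 * n) → V} (h : IsAltCycle G c x) : 2 ≤ n := by
  by_contra hlt
  obtain rfl : n = 1 := by omega
  have := h.2.2 0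
  have e : (0 : ZMod (2 * 1)) + 2 = 0 := by decide
  rw [e] at this
  exact this (by rw [Sym2.eq_swap])

lemma unroll_inj {V : Type*} {n : ℕ} {x : ZMod (2 * n) → V} (hx : Function.Injective x) (ε : ℤ)
    (a b : ℤ) (h : x ((a + ε : ℤ) : ZMod (2 * n)) = x ((b + ε : ℤ) : ZMod (2 * n)))
    (h1 : -(2 * (n : ℤ)) < a - b) (h2 : a - b < 2 * n) : a = b := by
  have := hx h
  rw [ZMod.intCast_eq_intCast_iff_dvd_sub] at this
  have h3 : b + ε - (a + ε) = 0 := by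
    apply Int.eq_zero_of_abs_lt_dvd this
    rw [abs_lt]
    push_cast
    constructor <;> omega
  omega

/-- Let `G ∈ G₁ ⊕ G₂` where `G₁`, `G₂` are vertex-disjoint
2-edge-colored graphs with Hamiltonian alternating cycles `C₁ = x`, `C₂ = y`. If `G` has
no good pair and each `Cᵢ` has a vertex that is non-singular with respect to `C_{3-i}`,
then `G` is vertex alternating-pancyclic. -/
theorem cgs_two_vertex_alt_pancyclic {V : Type*} [Fintype V]
    (G : SimpleGraph V) (c : Sym2 V → Bool)
    {n m : ℕ} (hn : 0 < n) (hm : 0 < m)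
    (x : ZMod (2 * n) → V) (y : ZMod (2 * m) → V)
    (hG : IsCGSHam G c x y) (hgp : ¬ HasGoodPair G c x y)
    (hns1 : ∃ i, ¬ SingularX c x y i) (hns2 : ∃ j, ¬ SingularY c x y j) :
    VertexAltPancyclic G c := by
  obtain ⟨hx, hy, hdis, hcov, hadj⟩ := hG
  have hn2 := two_le_of_altCycle hn hx
  have hm2 := two_le_of_altCycle hm hy
  obtain ⟨ε, hε⟩ := exists_unroll hx
  obtain ⟨δ, hδ⟩ := exists_unroll hy
  have hne : ∀ i j, x i ≠ y j := by
    intro i j h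
    exact Set.disjoint_left.1 hdis ⟨i, rfl⟩ ⟨j, h.symm⟩
  have hcard : Fintype.card V = 2 * (n + m) := by
    have : NeZero (2 * n) := ⟨by omega⟩
    have : NeZero (2 * m) := ⟨by omega⟩
    have hb : Function.Bijective (Sum.elim x y) := by
      refine ⟨hx.1.sumElim hy.1 hne, ?_⟩
      intro v
      rcases hcov v with ⟨i, hi⟩ | ⟨j, hj⟩
      · exact ⟨Sum.inl i, hi⟩
      · exact ⟨Sum.inr j, hj⟩
    rw [← Fintype.card_of_bijective hb, Fintype.card_sum, ZMod.card, ZMod.card]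
    ring
  set X : ℤ → V := fun a => x ((a + ε : ℤ) : ZMod (2 * n)) with hXdef
  set Y : ℤ → V := fun a => y ((a + δ : ℤ) : ZMod (2 * m)) with hYdef
  have surX : ∀ i, ∃ a, x i = X a := by
    intro i
    obtain ⟨a, rfl⟩ := ZMod.intCast_surjective i
    exact ⟨a - ε, by simp [hXdef]⟩
  have surY : ∀ i, ∃ a, y i = Y a := by
    intro i
    obtain ⟨a, rfl⟩ := ZMod.intCast_surjective i
    exact ⟨a - δ, by simp [hYdef]⟩
  have X1 : ∀ a, X (a + 1) = x (((a + ε : ℤ) : ZMod (2 * n)) + 1) := by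
    intro a; simp only [hXdef]; congr 1; push_cast; ring
  have Y1 : ∀ a, Y (a + 1) = y (((a + δ : ℤ) : ZMod (2 * m)) + 1) := by
    intro a; simp only [hYdef]; congr 1; push_cast; ring
  have cX : ∀ a, c s(X a, X (a + 1)) = parB a := by
    intro a; rw [X1]; exact hε a
  have cY : ∀ a, c s(Y a, Y (a + 1)) = parB a := by
    intro a; rw [Y1]; exact hδ a
  have aX : ∀ a, G.Adj (X a) (X (a + 1)) := by
    intro a; rw [X1]; exact hx.2.1 _
  have aY : ∀ a, G.Adj (Y a) (Y (a + 1)) := by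
    intro a; rw [Y1]; exact hy.2.1 _
  have pX : ∀ a, X (a + 2 * n) = X a := by
    intro a; simp only [hXdef]; congr 1
    have : ((2 * n : ℕ) : ZMod (2 * n)) = 0 := ZMod.natCast_self _
    push_cast at this ⊢
    linear_combination this
  have pY : ∀ a, Y (a + 2 * m) = Y a := by
    intro a; simp only [hYdef]; congr 1
    have : ((2 * m : ℕ) : ZMod (2 * m)) = 0 := ZMod.natCast_self _
    push_cast at this ⊢
    linear_combination this
  have hX : ∀ a b, X a = X b → -(2 * (n : ℤ)) < a - b → a - b < 2 * n → a = b :=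
    fun a b h h1 h2 => unroll_inj hx.1 ε a b h h1 h2
  have hY : ∀ a b, Y a = Y b → -(2 * (m : ℤ)) < a - b → a - b < 2 * m → a = b :=
    fun a b h h1 h2 => unroll_inj hy.1 δ a b h h1 h2
  have cov : ∀ v, (∃ a, v = X a) ∨ ∃ a, v = Y a := by
    intro v
    rcases hcov v with ⟨i, rfl⟩ | ⟨j, rfl⟩
    · exact Or.inl (surX i)
    · exact Or.inr (surY j)
  have good : ∀ s t t' : ℤ, (t' = t - 1 ∨ t' = t + 1) → c s(Y t', Y t) = parB s →
      c s(X s, Y t) = parB s → c s(X (s + 1), Y t') ≠ parB s := by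
    intro s t t' ht h1 h2 h3
    apply hgp
    refine ⟨((s + ε : ℤ) : ZMod (2 * n)), ((s + 1 + ε : ℤ) : ZMod (2 * n)),
      ((t + δ : ℤ) : ZMod (2 * m)), ((t' + δ : ℤ) : ZMod (2 * m)), Or.inr ?_, ?_,
      hadj _ _, hadj _ _, ?_, ?_, ?_⟩
    · push_cast; ring
    · rcases ht with rfl | rfl
      · left; push_cast; ring
      · right; push_cast; ring
    · exact (cX s).trans h2.symm
    · exact h3.trans h2.symm
    · exact h1.trans h2.symm
  have H1 : CoreData G c n m X Y := by
    refine ⟨hX, hY, fun a b => hne _ _, pX, pY, aX, aY, fun a b => hadj _ _, cX, cY, ?_, cov⟩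
    intro s t hst h
    refine good s t (t - 1) (Or.inl rfl) ?_ h
    have := cY (t - 1)
    rw [sub_add_cancel] at this
    rw [this]; exact parB_congr (by omega)
  have H2 : CoreData G c n m X (fun t => Y (1 - t)) := by
    refine ⟨hX, ?_, fun a b => hne _ _, pX, ?_, aX, ?_, fun a b => hadj _ _, cX, ?_, ?_, ?_⟩
    · intro a b h h1 h2
      have := hY _ _ h (by omega) (by omega)
      omega
    · intro a
      have := pY (1 - (a + 2 * m))
      rw [← this]; congr 1; ring
    · intro a
      have := (aY (1 - (a + 1))).symm
      rwa [show 1 - (a + 1) + 1 = 1 - a by ring] at this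
    · intro a
      have := cY (1 - (a + 1))
      rw [show 1 - (a + 1) + 1 = 1 - a by ring, Sym2.eq_swap] at this
      rw [this]; exact parB_congr (by omega)
    · intro s t hst h
      refine good s (1 - t) (1 - (t - 1)) (Or.inr (by ring)) ?_ h
      have := cY (1 - t)
      rw [Sym2.eq_swap, show 1 - (t - 1) = 1 - t + 1 by ring, this]
      exact parB_congr (by omega)
    · intro v
      rcases cov v with h | ⟨a, h⟩
      · exact Or.inl h
      · exact Or.inr ⟨1 - a, by rw [h]; congr 1; ring⟩
  by_contra hcon
  have K1 : ∀ k, k % 2 = 1 → (CoreData.F c X Y k ↔ CoreData.F c X Y 1) := by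
    intro k hk
    by_contra hne'
    apply hcon
    by_cases h : CoreData.F c X Y k
    · exact H1.main hn2 hm2 hcard k 1 hk (by norm_num) h (by tauto)
    · exact H1.main hn2 hm2 hcard 1 k (by norm_num) hk (by tauto) h
  have K2 : ∀ k, k % 2 = 1 → (CoreData.F c X (fun t => Y (1 - t)) k ↔
      CoreData.F c X (fun t => Y (1 - t)) 1) := by
    intro k hk
    by_contra hne'
    apply hcon
    by_cases h : CoreData.F c X (fun t => Y (1 - t)) k
    · exact H2.main hn2 hm2 hcard k 1 hk (by norm_num) h (by tauto)
    · exact H2.main hn2 hm2 hcard 1 k (by norm_num) hk (by tauto) h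
  have L1 : ∀ s t : ℤ, (s + t) % 2 = 1 → (c s(X s, Y t) = parB s ↔ CoreData.F c X Y 1) :=
    fun s t h => (H1.F_iff hn hm s t h).trans (K1 _ h)
  have L2 : ∀ s t : ℤ, (s + t) % 2 = 0 → (c s(X s, Y t) = parB s ↔
      CoreData.F c X (fun t => Y (1 - t)) 1) := by
    intro s t h
    have := (H2.F_iff hn hm s (1 - t) (by omega)).trans (K2 _ (by omega))
    rwa [show 1 - (1 - t) = t by ring] at this
  generalize CoreData.F c X Y 1 = p at L1
  generalize CoreData.F c X (fun t => Y (1 - t)) 1 = q at L2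
  have boolext : ∀ (u v w : Bool), (u = w ↔ v = w) → u = v := by decide
  by_cases hpq : p ↔ q
  · obtain ⟨i, hi⟩ := hns1
    apply hi
    refine ⟨⟨0, trivial⟩, fun j j' => ?_⟩
    obtain ⟨s, hs⟩ := surX i
    obtain ⟨t, ht⟩ := surY j
    obtain ⟨t', ht'⟩ := surY j'
    rw [hs, ht, ht']
    have L : ∀ t, c s(X s, Y t) = parB s ↔ p := by
      intro t
      rcases Int.emod_two_eq_zero_or_one (s + t) with h | h
      · exact (L2 s t h).trans hpq.symm
      · exact L1 s t h
    exact boolext _ _ _ ((L t).trans (L t').symm)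
  · obtain ⟨j, hj⟩ := hns2
    apply hj
    refine ⟨⟨0, trivial⟩, fun i i' => ?_⟩
    obtain ⟨t, ht⟩ := surY j
    obtain ⟨s, hs⟩ := surX i
    obtain ⟨s', hs'⟩ := surX i'
    rw [hs, ht, hs']
    have L : ∀ s, c s(X s, Y t) = parB t ↔ q := by
      intro s
      rcases Int.emod_two_eq_zero_or_one (s + t) with h | h
      · rw [← L2 s t h, parB_congr (s := t) (t := s) (by omega)]
      · have h1 := L1 s t h
        have h2 := parB_ne (s := t) (t := s) (by omega)
        have h3 : ∀ u v : Bool, (u = !v) ↔ ¬ (u = v) := by decide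
        rw [h2, h3, h1]
        tauto
    exact boolext _ _ _ ((L s).trans (L s').symm)
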